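/- Let N ≥ 1 and r, s, q ∈ ℂ with h = r + 4s + 2q(N−1) ≠ 0 and q(r + 8s + 2(N−2)q) ≠ 0, and let λ ∈ ℂ satisfy λ² = 2h³ / ( q(r + 8s + 2(N−2)q) ). Then the configuration BC_N⁺(r,s,q) together with λ satisfies the trigonometric WDVV equations. -/

import Mathlib

open scoped Classical
open Finset

noncomputable section

/-- Evaluation of a covector `α` on a vector `x` in `ℂ^N`. -/
def ev {N : ℕ} (α x : Fin N → ℂ) : ℂ := ∑ i, α i * x i

/-- The bilinear form `G_𝒜` associated to a configuration. -/
def Gform {N : ℕ} (A : Finset (Fin N → ℂ)) (c : (Fin N → ℂ) → ℂ)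
    (u v : Fin N → ℂ) : ℂ :=
  ∑ α ∈ A, c α * ev α u * ev α v

/-- `(α ∧ β)(a, b) = α(a)β(b) - α(b)β(a)`. -/
def wedge {N : ℕ} (α β a b : Fin N → ℂ) : ℂ :=
  ev α a * ev β b - ev α b * ev β a

/-- Non-degeneracy of `G_𝒜`. -/
def Nondeg {N : ℕ} (A : Finset (Fin N → ℂ)) (c : (Fin N → ℂ) → ℂ) : Prop :=
  ∀ u : Fin N → ℂ, (∀ v : Fin N → ℂ, Gform A c u v = 0) → u = 0

/-- `dual` assigns to each covector `γ ∈ 𝒜` its `G_𝒜`-dual vector `γ^∨`. -/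
def IsDual {N : ℕ} (A : Finset (Fin N → ℂ)) (c : (Fin N → ℂ) → ℂ)
    (dual : (Fin N → ℂ) → Fin N → ℂ) : Prop :=
  ∀ γ ∈ A, ∀ v : Fin N → ℂ, Gform A c (dual γ) v = ev γ v

/-- `γ` is proportional to `α`. -/
def Collin {N : ℕ} (α γ : Fin N → ℂ) : Prop := ∃ t : ℂ, γ = t • α

/-- `γ₁ ∼ γ₂` iff `γ₁ + γ₂` or `γ₁ - γ₂` is an integer multiple of `α`. -/
def SeriesRel {N : ℕ} (α γ₁ γ₂ : Fin N → ℂ) : Prop :=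
  ∃ m : ℤ, γ₁ + γ₂ = (m : ℂ) • α ∨ γ₁ - γ₂ = (m : ℂ) • α

/-- `Γ` is an (maximal) `α`-series of the configuration `A`. -/
def IsSeries {N : ℕ} (A : Finset (Fin N → ℂ)) (α : Fin N → ℂ)
    (Γ : Finset (Fin N → ℂ)) : Prop :=
  Γ.Nonempty ∧ (∀ γ ∈ Γ, γ ∈ A ∧ ¬ Collin α γ) ∧
    (∀ γ₁ ∈ Γ, ∀ γ₂ ∈ Γ, SeriesRel α γ₁ γ₂) ∧
    (∀ β ∈ A, ¬ Collin α β → (∃ γ ∈ Γ, SeriesRel α β γ) → β ∈ Γ)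

/-- The trigonometric ∨-conditions. -/
def IsTrigVSystem {N : ℕ} (A : Finset (Fin N → ℂ)) (c : (Fin N → ℂ) → ℂ)
    (dual : (Fin N → ℂ) → Fin N → ℂ) : Prop :=
  ∀ α ∈ A, ∀ Γ : Finset (Fin N → ℂ), IsSeries A α Γ →
    ∀ a b : Fin N → ℂ, ∑ β ∈ Γ, c β * ev α (dual β) * wedge α β a b = 0

/-- The form `G^{(1)}_𝒜` evaluated at `(u, v)`. -/
def G1form {N : ℕ} (A : Finset (Fin N → ℂ)) (c : (Fin N → ℂ) → ℂ)
    (u v : Fin N → ℂ) : ℂ :=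
  ∑ α ∈ A, ∑ β ∈ A, c α * c β * wedge α β u v ^ 2

/-- The form `G^{(2)}_𝒜` evaluated at `(u, v)`. -/
def G2form {N : ℕ} (A : Finset (Fin N → ℂ)) (c : (Fin N → ℂ) → ℂ)
    (dual : (Fin N → ℂ) → Fin N → ℂ) (u v : Fin N → ℂ) : ℂ :=
  ∑ α ∈ A, ∑ β ∈ A,
    c α * c β * Gform A c (dual α) (dual β) * wedge α β u v ^ 2

/-- Complex cotangent. -/
def ccot (z : ℂ) : ℂ := Complex.cos z / Complex.sin z

/-- The matrix `F_i(x)` of third derivatives of the prepotential, `1 ≤ i ≤ N`. -/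
def Fmat {N : ℕ} (A : Finset (Fin N → ℂ)) (c : (Fin N → ℂ) → ℂ) (lam : ℂ)
    (i : Fin N) (x : Fin N → ℂ) : Matrix (Fin N ⊕ Unit) (Fin N ⊕ Unit) ℂ :=
  Matrix.of fun p q =>
    match p, q with
    | Sum.inl p, Sum.inl q => lam * ∑ α ∈ A, c α * α i * α p * α q * ccot (ev α x)
    | Sum.inl p, Sum.inr _ => 2 * ∑ α ∈ A, c α * α i * α p
    | Sum.inr _, Sum.inl q => 2 * ∑ α ∈ A, c α * α i * α q
    | Sum.inr _, Sum.inr _ => 0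

/-- The constant matrix `F_{N+1}`. -/
def Flast {N : ℕ} (A : Finset (Fin N → ℂ)) (c : (Fin N → ℂ) → ℂ) :
    Matrix (Fin N ⊕ Unit) (Fin N ⊕ Unit) ℂ :=
  Matrix.of fun p q =>
    match p, q with
    | Sum.inl p, Sum.inl q => 2 * ∑ α ∈ A, c α * α p * α q
    | Sum.inr _, Sum.inr _ => 2
    | _, _ => 0

/-- `(𝒜, c, λ)` satisfies the trigonometric WDVV equations. -/
def SatisfiesWDVV {N : ℕ} (A : Finset (Fin N → ℂ)) (c : (Fin N → ℂ) → ℂ)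
    (lam : ℂ) : Prop :=
  IsUnit (Flast A c) ∧
    ∀ x : Fin N → ℂ, (∀ α ∈ A, Complex.sin (ev α x) ≠ 0) →
      ∀ i j : Fin N,
        Fmat A c lam i x * (Flast A c)⁻¹ * Fmat A c lam j x =
          Fmat A c lam j x * (Flast A c)⁻¹ * Fmat A c lam i x

/-- The covectors of `𝒜` lie in a lattice of full rank `N` in `(ℂ^N)^*`. -/
def InLattice {N : ℕ} (A : Finset (Fin N → ℂ)) : Prop :=
  ∃ L : Fin N → Fin N → ℂ, LinearIndependent ℂ L ∧
    ∀ α ∈ A, ∃ m : Fin N → ℤ, α = ∑ i, (m i : ℂ) • L i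

/-- No two covectors of `𝒜` are negatively proportional. -/
def PositiveSystem {N : ℕ} (A : Finset (Fin N → ℂ)) : Prop :=
  ∀ α ∈ A, ∀ t : ℝ, t < 0 → (t : ℂ) • α ∉ A

/-- The standard covector `e^i` of `(ℂ^N)^*`. -/
def esgl (N : ℕ) (i : Fin N) : Fin N → ℂ := Pi.single i 1

/-- The set of covectors of the configuration `BC_N⁺`:
`e^i`, `2e^i` (`1 ≤ i ≤ N`) and `e^i ± e^j` (`1 ≤ i < j ≤ N`). -/
def BCfin (N : ℕ) : Finset (Fin N → ℂ) :=
  (Finset.univ.image (fun i : Fin N => esgl N i)) ∪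
  (Finset.univ.image (fun i : Fin N => (2 : ℂ) • esgl N i)) ∪
  ((Finset.univ.filter (fun p : Fin N × Fin N => p.1 < p.2)).image
    (fun p => esgl N p.1 + esgl N p.2)) ∪
  ((Finset.univ.filter (fun p : Fin N × Fin N => p.1 < p.2)).image
    (fun p => esgl N p.1 - esgl N p.2))

/-! Non-degeneracy of `G_𝒜` lets `G_𝒜⁻¹` cancel against the borders of the matrices `F_i`, which are
the rows and columns of `G_𝒜`. With `B_i` the upper left block of `F_i` divided by `λ`, the WDVV
equations become
`λ² (B_i G_𝒜⁻¹ B_j - B_j G_𝒜⁻¹ B_i) = -4 G_𝒜 (E_ij - E_ji) G_𝒜`.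
For `BC_N⁺` the form `G_𝒜` is `h` times the standard one, so the claim is that `[B_i, B_j]` is a
prescribed multiple of `E_ij - E_ji`. Every covector involves at most two coordinates, hence the
`B_i` are the slices of a symmetric tensor with entries `T_iij` only. The commutator of two such
slices vanishes off the positions `(i, j)` and `(j, i)` by a three-term relation between cotangents,
and its `(i, j)` entry is constant by a cyclic one. -/

section PairTensor

variable {ι R : Type*} [DecidableEq ι] [CommRing R]

/-- The totally symmetric 3-tensor `T` with `T i i j = M i j` that vanishes on triples of pairwise
distinct indices, presented as the family of its slices `T i`. -/
def pairTensor (M : ι → ι → R) (i : ι) : Matrix ι ι R :=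
  Matrix.of fun a b => if i = a then M i b else if i = b then M i a else if a = b then M a i else 0

theorem pairTensor_self_apply (M : ι → ι → R) (i b : ι) : pairTensor M i i b = M i b := by
  simp [pairTensor]

theorem pairTensor_apply_of_ne (M : ι → ι → R) {i a : ι} (h : i ≠ a) (b : ι) :
    pairTensor M i a b = (if i = b then M i a else 0) + (if a = b then M a i else 0) := by
  simp only [pairTensor, Matrix.of_apply]
  grind

theorem pairTensor_transpose (M : ι → ι → R) (i : ι) :
    (pairTensor M i).transpose = pairTensor M i := by
  ext a b
  simp only [pairTensor, Matrix.transpose_apply, Matrix.of_apply]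
  grind

theorem eq_smul_single_sub_single {C : Matrix ι ι R} (hskew : C.transpose = -C)
    (hdiag : ∀ a, C a a = 0) {i j : ι}
    (hsupp : ∀ a, i ≠ a → j ≠ a → ∀ b, C a b = 0) :
    C = C i j • (Matrix.single i j 1 - Matrix.single j i 1) := by
  have hskew' (a b : ι) : C b a = -C a b := congrFun₂ hskew a b
  ext a b
  simp only [Matrix.smul_apply, Matrix.sub_apply, Matrix.single_apply, smul_eq_mul]
  have hab := hskew' a b
  have hji := hskew' i j
  by_cases hia : i = a <;> by_cases hja : j = a <;> by_cases hib : i = b <;>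
    by_cases hjb : j = b <;> grind

variable [Fintype ι]

theorem pairTensor_mul_apply_of_ne (M : ι → ι → R) {i a : ι} (h : i ≠ a) (X : Matrix ι ι R)
    (b : ι) : (pairTensor M i * X) a b = M i a * X i b + M a i * X a b := by
  simp [Matrix.mul_apply, pairTensor_apply_of_ne M h, add_mul, Finset.sum_add_distrib]

theorem lie_pairTensor_transpose (M : ι → ι → R) (i j : ι) :
    ⁅pairTensor M i, pairTensor M j⁆.transpose = -⁅pairTensor M i, pairTensor M j⁆ := by
  simp only [Ring.lie_def, Matrix.transpose_sub, Matrix.transpose_mul, pairTensor_transpose,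
    neg_sub]

theorem lie_pairTensor_apply_same (M : ι → ι → R) (i j a : ι) :
    ⁅pairTensor M i, pairTensor M j⁆ a a = 0 := by
  have h := congrFun₂ (Matrix.transpose_mul (pairTensor M i) (pairTensor M j)) a a
  simpa only [Ring.lie_def, Matrix.sub_apply, sub_eq_zero, pairTensor_transpose,
    Matrix.transpose_apply] using h

theorem lie_pairTensor_apply_self (M : ι → ι → R) {i j : ι} (hij : i ≠ j) :
    ⁅pairTensor M i, pairTensor M j⁆ i j = ∑ k, M i k * M j k - M i j ^ 2 - M j i ^ 2 := by
  have hcol (k : ι) : pairTensor M j k j = M j k := by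
    rw [← pairTensor_self_apply M j k, ← Matrix.transpose_apply (pairTensor M j),
      pairTensor_transpose]
  have hij' : (pairTensor M i * pairTensor M j) i j = ∑ k, M i k * M j k := by
    simp only [Matrix.mul_apply, pairTensor_self_apply, hcol]
  rw [Ring.lie_def, Matrix.sub_apply, hij', pairTensor_mul_apply_of_ne M hij.symm,
    pairTensor_self_apply, pairTensor_apply_of_ne M hij]
  simp only [if_true, if_neg hij]
  ring

theorem lie_pairTensor_apply_of_ne (M : ι → ι → R)
    (hM : ∀ i j k, i ≠ j → i ≠ k → j ≠ k → M i j * M j k + M i k * M k j = M i j * M i k)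
    {i j a : ι} (hij : i ≠ j) (hia : i ≠ a) (hja : j ≠ a) (b : ι) :
    ⁅pairTensor M i, pairTensor M j⁆ a b = 0 := by
  rw [Ring.lie_def, Matrix.sub_apply, pairTensor_mul_apply_of_ne M hia,
    pairTensor_mul_apply_of_ne M hja, pairTensor_apply_of_ne M hij,
    pairTensor_apply_of_ne M hij.symm, pairTensor_apply_of_ne M hia, pairTensor_apply_of_ne M hja]
  grind

theorem lie_pairTensor {M : ι → ι → R} {κ : R}
    (hM : ∀ i j k, i ≠ j → i ≠ k → j ≠ k → M i j * M j k + M i k * M k j = M i j * M i k)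
    (hκ : ∀ i j, i ≠ j → ∑ k, M i k * M j k - M i j ^ 2 - M j i ^ 2 = κ) (i j : ι) :
    ⁅pairTensor M i, pairTensor M j⁆ = κ • (Matrix.single i j 1 - Matrix.single j i 1) := by
  rcases eq_or_ne i j with rfl | hij
  · rw [Ring.lie_def, sub_self, sub_self, smul_zero]
  · rw [← hκ i j hij, ← lie_pairTensor_apply_self M hij]
    exact eq_smul_single_sub_single (lie_pairTensor_transpose M i j)
      (lie_pairTensor_apply_same M i j) fun a => lie_pairTensor_apply_of_ne M hM hij

end PairTensor

section Criterion

variable {N : ℕ} (A : Finset (Fin N → ℂ)) (c : (Fin N → ℂ) → ℂ)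

/-- The matrix of the form `G_𝒜` in the standard basis. -/
def gramMatrix : Matrix (Fin N) (Fin N) ℂ :=
  Matrix.of fun p q => ∑ α ∈ A, c α * α p * α q

/-- The matrix `(∑ c_α α_i α_p α_q cot α(x))_{pq}`, that is, the upper left block of `F_i(x)`
without the factor `λ`. -/
def cotMatrix (x : Fin N → ℂ) (i : Fin N) : Matrix (Fin N) (Fin N) ℂ :=
  Matrix.of fun p q => ∑ α ∈ A, c α * α i * α p * α q * ccot (ev α x)

theorem gramMatrix_apply (p q : Fin N) : gramMatrix A c p q = ∑ α ∈ A, c α * α p * α q :=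
  rfl

theorem gramMatrix_apply_comm (p q : Fin N) : gramMatrix A c p q = gramMatrix A c q p :=
  Finset.sum_congr rfl fun _ _ => mul_right_comm _ _ _

theorem cotMatrix_comm_left (x : Fin N → ℂ) (i p q : Fin N) :
    cotMatrix A c x i p q = cotMatrix A c x p i q :=
  Finset.sum_congr rfl fun _ _ => by ring

theorem cotMatrix_comm_right (x : Fin N → ℂ) (i p q : Fin N) :
    cotMatrix A c x i p q = cotMatrix A c x i q p :=
  Finset.sum_congr rfl fun _ _ => by ring

theorem cotMatrix_mul_single (x : Fin N → ℂ) (i j : Fin N) :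
    cotMatrix A c x i * Matrix.single j () (1 : ℂ) =
      cotMatrix A c x j * Matrix.single i () (1 : ℂ) := by
  ext p q
  simp only [Matrix.mul_single_apply_same, cotMatrix_comm_right A c x _ p]
  rw [cotMatrix_comm_left]

theorem single_mul_cotMatrix (x : Fin N → ℂ) (i j : Fin N) :
    Matrix.single () i (1 : ℂ) * cotMatrix A c x j =
      Matrix.single () j (1 : ℂ) * cotMatrix A c x i := by
  ext p q
  simp only [Matrix.single_mul_apply_same]
  rw [cotMatrix_comm_left]

theorem Flast_eq_fromBlocks :
    Flast A c = Matrix.fromBlocks ((2 : ℂ) • gramMatrix A c) 0 0 ((2 : ℂ) • 1) := by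
  ext (p | p) (q | q) <;> simp [Flast, gramMatrix]

theorem Fmat_eq_fromBlocks (lam : ℂ) (i : Fin N) (x : Fin N → ℂ) :
    Fmat A c lam i x =
      Matrix.fromBlocks (lam • cotMatrix A c x i)
        ((2 : ℂ) • (gramMatrix A c * Matrix.single i () (1 : ℂ)))
        ((2 : ℂ) • (Matrix.single () i (1 : ℂ) * gramMatrix A c)) 0 := by
  ext (p | p) (q | q)
  · rfl
  · simp [gramMatrix_apply_comm A c p i, Fmat, gramMatrix_apply]
  · simp [Fmat, gramMatrix_apply]
  · rfl

variable {A c}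

theorem Flast_mul_fromBlocks_eq_one (hG : IsUnit (gramMatrix A c)) :
    Flast A c * Matrix.fromBlocks ((2⁻¹ : ℂ) • (gramMatrix A c)⁻¹) 0 0 ((2⁻¹ : ℂ) • 1) = 1 := by
  have hG' := Matrix.mul_nonsing_inv _ ((Matrix.isUnit_iff_isUnit_det _).1 hG)
  simp [Flast_eq_fromBlocks, Matrix.fromBlocks_multiply, hG']

theorem Fmat_mul_Flast_inv_mul_Fmat (hG : IsUnit (gramMatrix A c)) (lam : ℂ) (x : Fin N → ℂ)
    (i j : Fin N) :
    Fmat A c lam i x * (Flast A c)⁻¹ * Fmat A c lam j x =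
      Matrix.fromBlocks
        ((lam ^ 2 / 2) • (cotMatrix A c x i * (gramMatrix A c)⁻¹ * cotMatrix A c x j) +
          (2 : ℂ) • (gramMatrix A c * Matrix.single i j 1 * gramMatrix A c))
        (lam • (cotMatrix A c x i * Matrix.single j () (1 : ℂ)))
        (lam • (Matrix.single () i (1 : ℂ) * cotMatrix A c x j))
        ((2 : ℂ) • (Matrix.single () i (1 : ℂ) * gramMatrix A c * Matrix.single j () (1 : ℂ))) := by
  have hdet := (Matrix.isUnit_iff_isUnit_det _).1 hG
  have hsingle : Matrix.single i () (1 : ℂ) * Matrix.single () j (1 : ℂ) = Matrix.single i j 1 := by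
    rw [Matrix.single_mul_single_same, mul_one]
  rw [Matrix.inv_eq_right_inv (Flast_mul_fromBlocks_eq_one hG), Fmat_eq_fromBlocks,
    Fmat_eq_fromBlocks, Matrix.fromBlocks_multiply, Matrix.fromBlocks_multiply, ← hsingle]
  simp only [Matrix.mul_assoc, Matrix.nonsing_inv_mul_cancel_left _ _ hdet,
    Matrix.mul_nonsing_inv_cancel_left _ _ hdet, Matrix.mul_zero, Matrix.zero_mul, add_zero,
    zero_add, Matrix.smul_mul, Matrix.mul_smul, smul_zero, smul_smul, Matrix.mul_one]
  congr 1 <;> module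

theorem satisfiesWDVV_of_cotMatrix (hG : IsUnit (gramMatrix A c)) {lam : ℂ}
    (h : ∀ x : Fin N → ℂ, (∀ α ∈ A, Complex.sin (ev α x) ≠ 0) → ∀ i j : Fin N,
      lam ^ 2 • (cotMatrix A c x i * (gramMatrix A c)⁻¹ * cotMatrix A c x j -
          cotMatrix A c x j * (gramMatrix A c)⁻¹ * cotMatrix A c x i) =
        (-4 : ℂ) • (gramMatrix A c * (Matrix.single i j 1 - Matrix.single j i 1) *
          gramMatrix A c)) :
    SatisfiesWDVV A c lam := by
  refine ⟨IsUnit.of_mul_eq_one _ (Flast_mul_fromBlocks_eq_one hG), fun x hx i j => ?_⟩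
  rw [Fmat_mul_Flast_inv_mul_Fmat hG, Fmat_mul_Flast_inv_mul_Fmat hG, Matrix.fromBlocks_inj]
  refine ⟨?_, ?_, ?_, ?_⟩
  · have hij := h x hx i j
    rw [mul_sub, sub_mul] at hij
    linear_combination (norm := module) (2⁻¹ : ℂ) • hij
  · rw [cotMatrix_mul_single]
  · rw [single_mul_cotMatrix]
  · rw [Matrix.single_mul_mul_single, Matrix.single_mul_mul_single, gramMatrix_apply_comm]

theorem cotMatrix_eq_pairTensor
    (hA : ∀ α ∈ A, ∀ i a b, i ≠ a → i ≠ b → a ≠ b → α i * α a * α b = 0) (x : Fin N → ℂ)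
    (i : Fin N) : cotMatrix A c x i = pairTensor (fun j k => cotMatrix A c x j j k) i := by
  ext a b
  simp only [pairTensor, Matrix.of_apply]
  split_ifs with hia hib hab
  · rw [hia]
  · rw [hib, cotMatrix_comm_right]
  · rw [hab, cotMatrix_comm_left, cotMatrix_comm_right]
  · refine Finset.sum_eq_zero fun α hα => ?_
    rw [mul_assoc (c α), mul_assoc (c α), hA α hα i a b hia hib hab, mul_zero, zero_mul]

end Criterion

section Trigonometry

theorem ccot_neg (z : ℂ) : ccot (-z) = -ccot z := by
  simp only [ccot, Complex.cos_neg, Complex.sin_neg, div_neg]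

/-- The combination of cotangents contributed by the two covectors `e^i ± e^j`. -/
def cotDiff (u v : ℂ) : ℂ := ccot (u + v) - ccot (u - v)

theorem cotDiff_swap (u v : ℂ) : cotDiff v u = ccot (u + v) + ccot (u - v) := by
  rw [cotDiff, ← neg_sub u v, ccot_neg, add_comm v u, sub_neg_eq_add]

theorem cos_two_mul_sub_cos_two_mul (u v : ℂ) :
    Complex.cos (2 * u) - Complex.cos (2 * v) =
      -2 * Complex.sin (u + v) * Complex.sin (u - v) := by
  rw [Complex.cos_sub_cos, ← mul_add, ← mul_sub, mul_div_cancel_left₀ _ two_ne_zero,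
    mul_div_cancel_left₀ _ two_ne_zero]

theorem cotDiff_eq {u v : ℂ} (h : Complex.cos (2 * u) ≠ Complex.cos (2 * v)) :
    cotDiff u v = 2 * Complex.sin (2 * v) / (Complex.cos (2 * u) - Complex.cos (2 * v)) := by
  have hprod := sub_ne_zero.2 h
  rw [cos_two_mul_sub_cos_two_mul] at hprod ⊢
  have hadd : Complex.sin (u + v) ≠ 0 := fun h0 => hprod (by rw [h0]; ring)
  have hsub : Complex.sin (u - v) ≠ 0 := fun h0 => hprod (by rw [h0]; ring)
  have hv : Complex.sin (2 * v) = Complex.sin (u + v) * Complex.cos (u - v) -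
      Complex.cos (u + v) * Complex.sin (u - v) := by
    rw [← Complex.sin_sub]
    ring_nf
  rw [hv, cotDiff, ccot, ccot]
  field_simp
  ring

theorem cotDiff_three_term {u v w : ℂ} (huv : Complex.cos (2 * u) ≠ Complex.cos (2 * v))
    (huw : Complex.cos (2 * u) ≠ Complex.cos (2 * w))
    (hvw : Complex.cos (2 * v) ≠ Complex.cos (2 * w)) :
    cotDiff u v * cotDiff v w + cotDiff u w * cotDiff w v = cotDiff u v * cotDiff u w := by
  rw [cotDiff_eq huv, cotDiff_eq hvw, cotDiff_eq huw, cotDiff_eq hvw.symm]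
  grind

theorem cotDiff_mul_cotDiff {u v w : ℂ} (huv : Complex.cos (2 * u) ≠ Complex.cos (2 * v))
    (huw : Complex.cos (2 * u) ≠ Complex.cos (2 * w)) :
    cotDiff v u * cotDiff w u = 4 * (1 - Complex.cos (2 * u) ^ 2) /
      ((Complex.cos (2 * v) - Complex.cos (2 * u)) *
        (Complex.cos (2 * w) - Complex.cos (2 * u))) := by
  rw [cotDiff_eq huv.symm, cotDiff_eq huw.symm, ← Complex.sin_sq,
    div_mul_div_comm]
  ring

theorem cotDiff_cyclic {u v w : ℂ} (huv : Complex.cos (2 * u) ≠ Complex.cos (2 * v))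
    (huw : Complex.cos (2 * u) ≠ Complex.cos (2 * w))
    (hvw : Complex.cos (2 * v) ≠ Complex.cos (2 * w)) :
    cotDiff v u * cotDiff w u + cotDiff u v * cotDiff w v + cotDiff u w * cotDiff v w = -4 := by
  rw [cotDiff_mul_cotDiff huv huw, cotDiff_mul_cotDiff huv.symm hvw,
    cotDiff_mul_cotDiff huw.symm hvw.symm]
  grind

theorem ccot_mul_sin_two_mul {u : ℂ} (h : Complex.sin u ≠ 0) :
    ccot u * Complex.sin (2 * u) = 1 + Complex.cos (2 * u) := by
  rw [ccot, Complex.sin_two_mul, Complex.cos_two_mul]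
  field_simp
  ring

theorem ccot_mul_cotDiff_add {u v : ℂ} (hu : Complex.sin u ≠ 0) (hv : Complex.sin v ≠ 0)
    (h : Complex.cos (2 * u) ≠ Complex.cos (2 * v)) :
    ccot u * cotDiff v u + ccot v * cotDiff u v = -2 := by
  have hu' := ccot_mul_sin_two_mul hu
  have hv' := ccot_mul_sin_two_mul hv
  rw [cotDiff_eq h, cotDiff_eq h.symm]
  grind

theorem ccot_two_mul_mul_cotDiff_add {u v : ℂ} (hu : Complex.sin (2 * u) ≠ 0)
    (hv : Complex.sin (2 * v) ≠ 0) (h : Complex.cos (2 * u) ≠ Complex.cos (2 * v)) :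
    ccot (2 * u) * cotDiff v u + ccot (2 * v) * cotDiff u v = -2 := by
  have hu' : ccot (2 * u) * Complex.sin (2 * u) = Complex.cos (2 * u) := div_mul_cancel₀ _ hu
  have hv' : ccot (2 * v) * Complex.sin (2 * v) = Complex.cos (2 * v) := div_mul_cancel₀ _ hv
  rw [cotDiff_eq h, cotDiff_eq h.symm]
  grind

end Trigonometry

section FiniteSums

variable {ι M : Type*} [Fintype ι] [AddCommMonoid M]

theorem sum_compl_singleton_eq_add_sum_compl_pair [DecidableEq ι] {i j : ι} (hij : i ≠ j)
    (f : ι → M) :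
    ∑ k ∈ {i}ᶜ, f k = f j + ∑ k ∈ {i, j}ᶜ, f k := by
  rw [Finset.pair_comm, Finset.compl_insert, Finset.add_sum_erase]
  simpa using hij.symm

variable [LinearOrder ι] [LocallyFiniteOrderTop ι]

theorem sum_filter_fst_lt_snd (g : ι → ι → M) :
    ∑ p : ι × ι with p.1 < p.2, g p.1 p.2 = ∑ i, ∑ j ∈ Finset.Ioi i, g i j := by
  simp only [Finset.sum_filter, Fintype.sum_prod_type, ← Finset.filter_lt_eq_Ioi]

variable [LocallyFiniteOrderBot ι]

theorem sum_sum_Ioi_eq_sum_compl_singleton {g : ι → ι → M} (hsymm : ∀ i j, g i j = g j i) (k : ι)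
    (hk : ∀ i j, i ≠ k → j ≠ k → g i j = 0) :
    ∑ i, ∑ j ∈ Finset.Ioi i, g i j = ∑ j ∈ {k}ᶜ, g k j := by
  -- A pair `{k, l}` is counted by exactly one of `f l k` and `f k l`, whatever the order of `k, l`.
  let f (j i : ι) : M := if i = k then g k j else 0
  have hgf (i j : ι) (hij : i < j) : g i j = f j i + f i j := by
    grind
  calc ∑ i, ∑ j ∈ Finset.Ioi i, g i j
      = ∑ i, ∑ j ∈ Finset.Ioi i, (f j i + f i j) :=
        Finset.sum_congr rfl fun i _ => Finset.sum_congr rfl fun j hj =>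
          hgf i j (Finset.mem_Ioi.1 hj)
    _ = ∑ i, ∑ j ∈ {i}ᶜ, f j i := Finset.sum_sum_Ioi_add_eq_sum_sum_off_diag f
    _ = ∑ j ∈ {k}ᶜ, f j k :=
        Fintype.sum_eq_single k fun i hi => Finset.sum_eq_zero fun j _ => if_neg hi
    _ = ∑ j ∈ {k}ᶜ, g k j := Finset.sum_congr rfl fun j _ => if_pos rfl

end FiniteSums

section Configuration

variable {N : ℕ}

theorem esgl_apply (i j : Fin N) : esgl N i j = if i = j then 1 else 0 := by
  simp only [esgl, Pi.single_apply, eq_comm]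

theorem esgl_apply_self (i : Fin N) : esgl N i i = 1 := by
  rw [esgl_apply, if_pos rfl]

theorem esgl_apply_of_ne {i j : Fin N} (hij : i ≠ j) : esgl N i j = 0 := by
  rw [esgl_apply, if_neg hij]

theorem ev_esgl (i : Fin N) (x : Fin N → ℂ) : ev (esgl N i) x = x i := by
  simp [ev, esgl_apply]

theorem ev_smul (t : ℂ) (α x : Fin N → ℂ) : ev (t • α) x = t * ev α x := by
  simp [ev, Finset.mul_sum, mul_assoc]

theorem ev_add (α β x : Fin N → ℂ) : ev (α + β) x = ev α x + ev β x := by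
  simp [ev, add_mul, Finset.sum_add_distrib]

theorem ev_neg (α x : Fin N → ℂ) : ev (-α) x = -ev α x := by
  simp [ev]

theorem ev_sub (α β x : Fin N → ℂ) : ev (α - β) x = ev α x - ev β x := by
  rw [sub_eq_add_neg, ev_add, ev_neg, sub_eq_add_neg]

theorem mem_BCfin {α : Fin N → ℂ} :
    α ∈ BCfin N ↔ (∃ i, esgl N i = α) ∨ (∃ i, (2 : ℂ) • esgl N i = α) ∨
      (∃ i j, i < j ∧ esgl N i + esgl N j = α) ∨ ∃ i j, i < j ∧ esgl N i - esgl N j = α := by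
  simp [BCfin]

theorem esgl_injective : Function.Injective (esgl N) :=
  fun i j h => by simpa [esgl_apply] using (congrFun h j)

theorem esgl_add_smul_esgl_injOn {t : ℂ} (ht : t ≠ 0) :
    Set.InjOn (fun p : Fin N × Fin N => esgl N p.1 + t • esgl N p.2) {p | p.1 < p.2} := by
  rintro ⟨i, j⟩ hij ⟨k, l⟩ hkl h
  have hi := congrFun h i
  have hj := congrFun h j
  have hk := congrFun h k
  have hl := congrFun h l
  simp only [Pi.add_apply, Pi.smul_apply, smul_eq_mul, esgl_apply, Set.mem_ofPred_eq]
    at hi hj hk hl hij hkl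
  grind

theorem sum_BCfin (f : (Fin N → ℂ) → ℂ) :
    ∑ α ∈ BCfin N, f α = ∑ i, f (esgl N i) + ∑ i, f ((2 : ℂ) • esgl N i) +
      ∑ i, ∑ j ∈ Finset.Ioi i, (f (esgl N i + esgl N j) + f (esgl N i - esgl N j)) := by
  have htwo : Function.Injective fun i => (2 : ℂ) • esgl N i :=
    (smul_right_injective _ two_ne_zero).comp esgl_injective
  rw [BCfin, Finset.sum_union, Finset.sum_union, Finset.sum_union,
    Finset.sum_image esgl_injective.injOn,
    Finset.sum_image htwo.injOn,
    Finset.sum_image (by simpa using esgl_add_smul_esgl_injOn one_ne_zero),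
    Finset.sum_image (by
      simpa [← sub_eq_add_neg] using esgl_add_smul_esgl_injOn (neg_ne_zero.2 one_ne_zero)),
    sum_filter_fst_lt_snd fun i j => f (esgl N i + esgl N j),
    sum_filter_fst_lt_snd fun i j => f (esgl N i - esgl N j)]
  · simp only [Finset.sum_add_distrib, add_assoc]
  all_goals
    simp only [Finset.disjoint_left, Finset.mem_union, Finset.mem_image, Finset.mem_filter_univ,
      Finset.mem_univ, true_and, Prod.exists, not_exists, not_and]
  -- The coordinate sums `1, 2, 2, 0` separate the four families, except for `2e^i` and
  -- `e^k + e^l`, whose sums of squares are `4` and `2`.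
  · rintro _ ⟨i, rfl⟩ j h
    have := congrArg (ev · 1) h
    simp [ev_smul, ev_esgl] at this
  · rintro _ (⟨i, rfl⟩ | ⟨i, rfl⟩) k l hkl h
    · have := congrArg (ev · 1) h
      norm_num [ev_add, ev_esgl] at this
    · have := congrArg (fun α => ev α α) h
      norm_num [ev_add, ev_smul, ev_esgl, esgl_apply, hkl.ne, hkl.ne'] at this
  · rintro _ ((⟨i, rfl⟩ | ⟨i, rfl⟩) | ⟨i, j, -, rfl⟩) k l - h
    all_goals
      have := congrArg (ev · 1) h
      norm_num [ev_add, ev_sub, ev_smul, ev_esgl] at this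

theorem BCfin_mul_mul_eq_zero {α : Fin N → ℂ} (hα : α ∈ BCfin N) {i a b : Fin N} (hia : i ≠ a)
    (hib : i ≠ b) (hab : a ≠ b) : α i * α a * α b = 0 := by
  rcases mem_BCfin.1 hα with ⟨k, rfl⟩ | ⟨k, rfl⟩ | ⟨k, l, -, rfl⟩ | ⟨k, l, -, rfl⟩ <;>
  · simp only [Pi.add_apply, Pi.sub_apply, Pi.smul_apply, smul_eq_mul, esgl_apply]
    grind

section Regular

variable {x : Fin N → ℂ} (hx : ∀ α ∈ BCfin N, Complex.sin (ev α x) ≠ 0)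
include hx

theorem sin_ne_zero_of_regular (i : Fin N) : Complex.sin (x i) ≠ 0 := by
  simpa only [ev_esgl] using hx _ (mem_BCfin.2 (.inl ⟨i, rfl⟩))

theorem sin_two_mul_ne_zero_of_regular (i : Fin N) : Complex.sin (2 * x i) ≠ 0 := by
  simpa only [ev_smul, ev_esgl] using hx _ (mem_BCfin.2 (.inr (.inl ⟨i, rfl⟩)))

theorem cos_two_mul_ne_of_regular {i j : Fin N} (hij : i ≠ j) :
    Complex.cos (2 * x i) ≠ Complex.cos (2 * x j) := by
  wlog h : i < j generalizing i j
  · exact (this hij.symm (hij.symm.lt_of_le (not_lt.1 h))).symm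
  have hadd := hx _ (mem_BCfin.2 (.inr (.inr (.inl ⟨i, j, h, rfl⟩))))
  have hsub := hx _ (mem_BCfin.2 (.inr (.inr (.inr ⟨i, j, h, rfl⟩))))
  rw [ev_add, ev_esgl, ev_esgl] at hadd
  rw [ev_sub, ev_esgl, ev_esgl] at hsub
  rw [← sub_ne_zero, cos_two_mul_sub_cos_two_mul]
  exact mul_ne_zero (mul_ne_zero (by norm_num) hadd) hsub

theorem sum_compl_pair_cotDiff {i j : Fin N} (hij : i ≠ j) :
    cotDiff (x j) (x i) * ∑ k ∈ {i, j}ᶜ, cotDiff (x k) (x i) +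
        cotDiff (x i) (x j) * ∑ k ∈ {i, j}ᶜ, cotDiff (x k) (x j) +
        ∑ k ∈ {i, j}ᶜ, cotDiff (x i) (x k) * cotDiff (x j) (x k) = -4 * ((N : ℂ) - 2) := by
  have hcard : (({i, j}ᶜ : Finset (Fin N)).card : ℂ) = N - 2 := by
    rw [Finset.card_compl, Nat.cast_sub (Finset.card_le_univ _), Finset.card_pair hij,
      Fintype.card_fin, Nat.cast_two]
  rw [Finset.mul_sum, Finset.mul_sum, ← Finset.sum_add_distrib, ← Finset.sum_add_distrib,
    ← hcard, mul_comm (-4), ← nsmul_eq_mul, ← Finset.sum_const]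
  refine Finset.sum_congr rfl fun k hk => ?_
  obtain ⟨hki, hkj⟩ : k ≠ i ∧ k ≠ j := by simpa using hk
  exact cotDiff_cyclic (cos_two_mul_ne_of_regular hx hij)
    (cos_two_mul_ne_of_regular hx hki.symm) (cos_two_mul_ne_of_regular hx hkj.symm)

end Regular

/-- `c` assigns the multiplicities of `BC_N⁺(r,s,q)` to the covectors of `BCfin N`. -/
structure IsBCMultiplicity (c : (Fin N → ℂ) → ℂ) (r s q : ℂ) : Prop where
  apply_esgl : ∀ i, c (esgl N i) = r
  apply_two_smul : ∀ i, c ((2 : ℂ) • esgl N i) = s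
  apply_add : ∀ i j, i < j → c (esgl N i + esgl N j) = q
  apply_sub : ∀ i j, i < j → c (esgl N i - esgl N j) = q

namespace IsBCMultiplicity

variable {c : (Fin N → ℂ) → ℂ} {r s q : ℂ}

theorem sum_BCfin_of_even (hc : IsBCMultiplicity c r s q) {φ : (Fin N → ℂ) → ℂ}
    (hφ : ∀ α, φ (-α) = φ α) (k : Fin N) (hk : ∀ α, α k = 0 → φ α = 0) :
    ∑ α ∈ BCfin N, c α * φ α = r * φ (esgl N k) + s * φ ((2 : ℂ) • esgl N k) +
      q * ∑ l ∈ {k}ᶜ, (φ (esgl N k + esgl N l) + φ (esgl N k - esgl N l)) := by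
  have hsymm (i j : Fin N) : φ (esgl N i + esgl N j) + φ (esgl N i - esgl N j) =
      φ (esgl N j + esgl N i) + φ (esgl N j - esgl N i) := by
    rw [add_comm (esgl N i), ← hφ (esgl N i - esgl N j), neg_sub]
  rw [sum_BCfin, Fintype.sum_eq_single k, Fintype.sum_eq_single k, hc.apply_esgl,
    hc.apply_two_smul, ← sum_sum_Ioi_eq_sum_compl_singleton hsymm k, Finset.mul_sum]
  · congr 1
    refine Finset.sum_congr rfl fun i _ => ?_
    rw [Finset.mul_sum]
    refine Finset.sum_congr rfl fun j hj => ?_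
    have hij := Finset.mem_Ioi.1 hj
    rw [hc.apply_add i j hij, hc.apply_sub i j hij, mul_add]
  · intro i j hi hj
    rw [hk _ (by simp [esgl_apply_of_ne hi, esgl_apply_of_ne hj]),
      hk _ (by simp [esgl_apply_of_ne hi, esgl_apply_of_ne hj]), add_zero]
  · intro i hi
    rw [hk _ (by simp [esgl_apply_of_ne hi]), mul_zero]
  · intro i hi
    rw [hk _ (esgl_apply_of_ne hi), mul_zero]

theorem gramMatrix_eq (hc : IsBCMultiplicity c r s q) :
    gramMatrix (BCfin N) c = (r + 4 * s + 2 * q * ((N : ℂ) - 1)) • (1 : Matrix _ _ ℂ) := by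
  ext i j
  simp only [gramMatrix_apply, mul_assoc]
  rw [hc.sum_BCfin_of_even (by simp) i (by simp +contextual)]
  rcases eq_or_ne i j with rfl | hij
  · have hterm : ∀ l ∈ ({i}ᶜ : Finset (Fin N)),
        (esgl N i + esgl N l) i * (esgl N i + esgl N l) i +
          (esgl N i - esgl N l) i * (esgl N i - esgl N l) i = 2 := fun l hl => by
      norm_num [esgl_apply_self, esgl_apply_of_ne (show l ≠ i by simpa using hl)]
    have hcard : (({i}ᶜ : Finset (Fin N)).card : ℂ) = N - 1 := by
      rw [Finset.card_compl, Finset.card_singleton, Fintype.card_fin, Nat.cast_pred i.pos]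
    rw [Finset.sum_congr rfl hterm, Finset.sum_const, nsmul_eq_mul, hcard]
    simp only [Pi.smul_apply, Matrix.smul_apply, Matrix.one_apply_eq, esgl_apply_self, smul_eq_mul]
    ring
  · have hterm : ∀ l ∈ ({i}ᶜ : Finset (Fin N)),
        (esgl N i + esgl N l) i * (esgl N i + esgl N l) j +
          (esgl N i - esgl N l) i * (esgl N i - esgl N l) j = 0 := fun l hl => by
      simp [esgl_apply_self, esgl_apply_of_ne hij, esgl_apply_of_ne (show l ≠ i by simpa using hl)]
    rw [Finset.sum_eq_zero hterm]
    simp [esgl_apply_of_ne hij, hij]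

theorem cotMatrix_apply_of_ne (hc : IsBCMultiplicity c r s q) (x : Fin N → ℂ) {i j : Fin N}
    (hij : i ≠ j) : cotMatrix (BCfin N) c x i i j = q * cotDiff (x i) (x j) := by
  simp only [cotMatrix, Matrix.of_apply, mul_assoc]
  rw [hc.sum_BCfin_of_even (by simp [ev_neg, ccot_neg]) i (by simp +contextual),
    Finset.sum_eq_single_of_mem j (by simpa using hij.symm)]
  · simp only [Pi.add_apply, Pi.sub_apply, Pi.smul_apply, smul_eq_mul, esgl_apply_self,
      esgl_apply_of_ne hij, esgl_apply_of_ne hij.symm, ev_add, ev_sub, ev_esgl, cotDiff]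
    ring
  · intro l _ hlj
    simp [esgl_apply_of_ne hij, esgl_apply_of_ne hlj]

theorem cotMatrix_apply_self (hc : IsBCMultiplicity c r s q) (x : Fin N → ℂ) (i : Fin N) :
    cotMatrix (BCfin N) c x i i i = r * ccot (x i) + 8 * s * ccot (2 * x i) +
      q * ∑ k ∈ {i}ᶜ, cotDiff (x k) (x i) := by
  simp only [cotMatrix, Matrix.of_apply, mul_assoc]
  rw [hc.sum_BCfin_of_even (by simp [ev_neg, ccot_neg]) i (by simp +contextual)]
  congr 1
  · simp only [Pi.smul_apply, smul_eq_mul, esgl_apply_self, ev_smul, ev_esgl]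
    ring
  · refine congrArg (q * ·) (Finset.sum_congr rfl fun l hl => ?_)
    simp [esgl_apply_self, esgl_apply_of_ne (show l ≠ i by simpa using hl), ev_add, ev_sub,
      ev_esgl, cotDiff_swap]

theorem sum_cotMatrix_mul_cotMatrix (hc : IsBCMultiplicity c r s q) {x : Fin N → ℂ}
    (hx : ∀ α ∈ BCfin N, Complex.sin (ev α x) ≠ 0) {i j : Fin N} (hij : i ≠ j) :
    ∑ k, cotMatrix (BCfin N) c x i i k * cotMatrix (BCfin N) c x j j k -
        cotMatrix (BCfin N) c x i i j ^ 2 - cotMatrix (BCfin N) c x j j i ^ 2 =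
      -2 * (q * (r + 8 * s + 2 * ((N : ℂ) - 2) * q)) := by
  have hcos := cos_two_mul_ne_of_regular hx hij
  have hr := ccot_mul_cotDiff_add (sin_ne_zero_of_regular hx i) (sin_ne_zero_of_regular hx j)
    hcos
  have hs := ccot_two_mul_mul_cotDiff_add (sin_two_mul_ne_zero_of_regular hx i)
    (sin_two_mul_ne_zero_of_regular hx j) hcos
  have hcyclic := sum_compl_pair_cotDiff hx hij
  have hoff : ∑ k ∈ {i, j}ᶜ, cotMatrix (BCfin N) c x i i k * cotMatrix (BCfin N) c x j j k =
      q ^ 2 * ∑ k ∈ {i, j}ᶜ, cotDiff (x i) (x k) * cotDiff (x j) (x k) := by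
    rw [Finset.mul_sum]
    refine Finset.sum_congr rfl fun k hk => ?_
    obtain ⟨hki, hkj⟩ : k ≠ i ∧ k ≠ j := by simpa using hk
    rw [hc.cotMatrix_apply_of_ne x hki.symm, hc.cotMatrix_apply_of_ne x hkj.symm]
    ring
  rw [Fintype.sum_eq_add_sum_compl i, sum_compl_singleton_eq_add_sum_compl_pair hij, hoff,
    hc.cotMatrix_apply_self, hc.cotMatrix_apply_self, hc.cotMatrix_apply_of_ne x hij,
    hc.cotMatrix_apply_of_ne x hij.symm, sum_compl_singleton_eq_add_sum_compl_pair hij,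
    sum_compl_singleton_eq_add_sum_compl_pair hij.symm, Finset.pair_comm j i]
  linear_combination q * r * hr + 8 * q * s * hs + q ^ 2 * hcyclic

theorem lie_cotMatrix (hc : IsBCMultiplicity c r s q) {x : Fin N → ℂ}
    (hx : ∀ α ∈ BCfin N, Complex.sin (ev α x) ≠ 0) (i j : Fin N) :
    ⁅cotMatrix (BCfin N) c x i, cotMatrix (BCfin N) c x j⁆ =
      (-2 * (q * (r + 8 * s + 2 * ((N : ℂ) - 2) * q))) •
        (Matrix.single i j 1 - Matrix.single j i 1) := by
  have hpair (i : Fin N) := cotMatrix_eq_pairTensor (A := BCfin N) (c := c)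
    (fun α hα i a b => BCfin_mul_mul_eq_zero hα) x i
  rw [hpair i, hpair j]
  refine lie_pairTensor (fun i j k hij hik hjk => ?_)
    (fun i j hij => hc.sum_cotMatrix_mul_cotMatrix hx hij) i j
  simp only [hc.cotMatrix_apply_of_ne x hij, hc.cotMatrix_apply_of_ne x hik,
    hc.cotMatrix_apply_of_ne x hjk, hc.cotMatrix_apply_of_ne x hjk.symm]
  linear_combination q ^ 2 * cotDiff_three_term (cos_two_mul_ne_of_regular hx hij)
    (cos_two_mul_ne_of_regular hx hik) (cos_two_mul_ne_of_regular hx hjk)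

end IsBCMultiplicity

end Configuration

/-- the configuration `BC_N⁺(r,s,q)` with
`λ² = 2h³/(q(r + 8s + 2(N-2)q))`, `h = r + 4s + 2q(N-1)`, satisfies the
trigonometric WDVV equations. -/
theorem BC_satisfies_WDVV (N : ℕ) (hN : 1 ≤ N) (r s q lam : ℂ)
    (hh : r + 4 * s + 2 * q * ((N : ℂ) - 1) ≠ 0)
    (hq : q * (r + 8 * s + 2 * ((N : ℂ) - 2) * q) ≠ 0)
    (hlam : lam ^ 2 = 2 * (r + 4 * s + 2 * q * ((N : ℂ) - 1)) ^ 3 /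
      (q * (r + 8 * s + 2 * ((N : ℂ) - 2) * q)))
    (c : (Fin N → ℂ) → ℂ)
    (hc1 : ∀ i : Fin N, c (esgl N i) = r)
    (hc2 : ∀ i : Fin N, c ((2 : ℂ) • esgl N i) = s)
    (hc3 : ∀ i j : Fin N, i < j →
      c (esgl N i + esgl N j) = q ∧ c (esgl N i - esgl N j) = q) :
    SatisfiesWDVV (BCfin N) c lam := by
  have hc : IsBCMultiplicity c r s q :=
    ⟨hc1, hc2, fun i j h => (hc3 i j h).1, fun i j h => (hc3 i j h).2⟩
  set h := r + 4 * s + 2 * q * ((N : ℂ) - 1)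
  set κ := q * (r + 8 * s + 2 * ((N : ℂ) - 2) * q)
  have hG : gramMatrix (BCfin N) c = h • (1 : Matrix _ _ ℂ) := hc.gramMatrix_eq
  have hG_mul_inv : gramMatrix (BCfin N) c * h⁻¹ • (1 : Matrix _ _ ℂ) = 1 := by
    rw [hG, smul_mul_smul_comm, mul_inv_cancel₀ hh, one_smul, one_mul]
  have hscalar : lam ^ 2 * h⁻¹ * (-2 * κ) = -4 * h ^ 2 := by
    rw [hlam]
    field_simp
    ring
  refine satisfiesWDVV_of_cotMatrix (IsUnit.of_mul_eq_one _ hG_mul_inv) fun x hx i j => ?_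
  rw [Matrix.inv_eq_right_inv hG_mul_inv, hG]
  simp only [Matrix.mul_smul, Matrix.smul_mul, Matrix.mul_one, Matrix.one_mul]
  rw [← smul_sub, ← Ring.lie_def, hc.lie_cotMatrix hx i j, smul_smul, smul_smul, hscalar]
  module

end
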